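/- arXiv:2102.11844 — 3 statements merged into one kernel-verified Lean document; each statement's English description precedes it below -/
import Mathlib

section
/- Let X be a nonnegative integrable random variable whose law has density f continuous at the point s = ∑_{i=1}^n r_i, with cumulative distribution function F. Then the function h : ℝⁿ → ℝ, h(r) = E[min(∑_{i=1}^n r_i, X)], is differentiable at r, and its gradient is (1 − F(∑_i r_i)) times the all-ones vector; i.e., every partial derivative ∂h/∂r_i at r equals 1 − F(∑_i r_i). -/
open MeasureTheory ProbabilityTheory

lemma scalar_hasDerivAt
    {Ω : Type*} [MeasurableSpace Ω] (P : Measure Ω) [IsProbabilityMeasure P]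
    (X : Ω → ℝ) (hXm : Measurable X) (hXint : Integrable X P)
    (s : ℝ) (hne : ∀ᵐ ω ∂P, X ω ≠ s) :
    HasDerivAt (fun t : ℝ => ∫ ω, min t (X ω) ∂P)
      (1 - cdf (Measure.map X P) s) s := by
  have hms : MeasurableSet {ω | s < X ω} := measurableSet_lt measurable_const hXm
  have hprob : IsProbabilityMeasure (Measure.map X P) :=
    Measure.isProbabilityMeasure_map hXm.aemeasurable
  have key := (hasDerivAt_integral_of_dominated_loc_of_lip (μ := P) (𝕜 := ℝ)
    (F := fun t ω => min t (X ω)) (x₀ := s) (s := Set.univ)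
    (F' := Set.indicator {ω | s < X ω} (fun _ => (1 : ℝ))) (bound := fun _ => 1)
    Filter.univ_mem
    (Filter.Eventually.of_forall fun t => (measurable_const.min hXm).aestronglyMeasurable)
    ((integrable_const s).inf hXint)
    ((measurable_const.indicator hms).aestronglyMeasurable)
    (Filter.Eventually.of_forall fun ω => by
      simpa using ((LipschitzWith.id (α := ℝ)).min_const (X ω)).lipschitzOnWith (s := Set.univ))
    (integrable_const 1)
    (by
      filter_upwards [hne] with ω hω
      rcases lt_or_gt_of_ne hω with h | h
      · have h2 : ω ∉ {ω | s < X ω} := by simpa using h.le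
        rw [Set.indicator_of_notMem h2]
        refine (hasDerivAt_const s (X ω)).congr_of_eventuallyEq ?_
        filter_upwards [lt_mem_nhds h] with t ht
        exact min_eq_right ht.le
      · have h2 : ω ∈ {ω | s < X ω} := h
        rw [Set.indicator_of_mem h2]
        refine (hasDerivAt_id s).congr_of_eventuallyEq ?_
        filter_upwards [gt_mem_nhds h] with t ht
        exact min_eq_left ht.le)).2
  refine HasDerivAt.congr_deriv key ?_
  rw [integral_indicator hms, cdf_eq_real, map_measureReal_apply hXm measurableSet_Iic]
  have : {ω | s < X ω} = (X ⁻¹' Set.Iic s)ᶜ := by ext; simp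
  rw [this, setIntegral_const, probReal_compl_eq_one_sub (hXm measurableSet_Iic)]
  simp

/-- In the multi-path setting, `h(r) = E[min(∑ i, r i, X)]` is differentiable at `r`
(when the demand density `f` is continuous at `s = ∑ i, r i`), with gradient
`(1 - F(∑ i, r i))` times the all-ones vector, i.e. the Fréchet derivative is
`v ↦ (1 - F(∑ i, r i)) * ∑ i, v i`. -/
theorem expected_min_sum_hasFDerivAt
    {Ω : Type*} [MeasurableSpace Ω] (P : Measure Ω) [IsProbabilityMeasure P]
    (X : Ω → ℝ) (hXm : Measurable X) (hXnn : ∀ ω, 0 ≤ X ω) (hXint : Integrable X P)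
    (f : ℝ → ℝ) (hf : ∀ y, 0 ≤ f y) (hfm : Measurable f)
    (hlaw : Measure.map X P = volume.withDensity (fun y => ENNReal.ofReal (f y)))
    (n : ℕ) (r : Fin n → ℝ) (hcont : ContinuousAt f (∑ i, r i)) :
    HasFDerivAt (fun y : Fin n → ℝ => ∫ ω, min (∑ i, y i) (X ω) ∂P)
      ((1 - cdf (Measure.map X P) (∑ i, r i)) •
        (∑ i : Fin n, (ContinuousLinearMap.proj i : (Fin n → ℝ) →L[ℝ] ℝ))) r := by
  have hne : ∀ᵐ ω ∂P, X ω ≠ ∑ i, r i := by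
    have h0 : Measure.map X P {∑ i, r i} = 0 := by
      rw [hlaw]
      exact withDensity_absolutelyContinuous _ _ (by simp)
    rw [Measure.map_apply hXm (measurableSet_singleton _)] at h0
    rw [ae_iff]
    convert h0 using 2
    ext; simp
  have hd := scalar_hasDerivAt P X hXm hXint _ hne
  have hL : HasFDerivAt (fun y : Fin n → ℝ => ∑ i, y i)
      (∑ i : Fin n, (ContinuousLinearMap.proj i : (Fin n → ℝ) →L[ℝ] ℝ)) r :=
    HasFDerivAt.fun_sum fun i _ => hasFDerivAt_apply i r
  exact hd.comp_hasFDerivAt r hL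
end

section
/- Let X be a nonnegative integrable random variable whose law has density f with respect to Lebesgue measure satisfying 0 ≤ f ≤ M, with cumulative distribution function F. Let n ≥ 1 and let h : ℝⁿ → ℝ be h(r) = E[min(∑_{i=1}^n r_i, X)]. Then for all r, r⁰ ∈ ℝⁿ with nonnegative entries, −h(r) ≤ −h(r⁰) + (F(∑_i r⁰_i) − 1) · (∑_i r_i − ∑_i r⁰_i) + (n·M/2) · ∑_i (r_i − r⁰_i)². -/
open MeasureTheory ProbabilityTheory

theorem aux_bound {Ω : Type*} [MeasurableSpace Ω] (P : Measure Ω) [IsProbabilityMeasure P]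
    (X : Ω → ℝ) (hXm : Measurable X)
    (f : ℝ → ℝ) (M : ℝ) (hf : ∀ y, 0 ≤ f y) (hfM : ∀ y, f y ≤ M) (hfm : Measurable f)
    (hlaw : Measure.map X P = volume.withDensity (fun y => ENNReal.ofReal (f y)))
    (a b : ℝ) (hab : a ≤ b) (u : ℝ → ℝ) (hu : Continuous u)
    (hu0 : ∀ x ∈ Set.Ioc a b, 0 ≤ u x) :
    ∫ ω, (Set.Ioc a b).indicator u (X ω) ∂P ≤ M * ∫ x in a..b, u x := by
  have hgm : Measurable ((Set.Ioc a b).indicator u) :=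
    hu.measurable.indicator measurableSet_Ioc
  have h0 : ∀ x, 0 ≤ (Set.Ioc a b).indicator u x := fun x => Set.indicator_nonneg hu0 x
  have hint : Integrable ((Set.Ioc a b).indicator u) volume := by
    rw [integrable_indicator_iff measurableSet_Ioc]
    exact (hu.integrableOn_Icc).mono_set Set.Ioc_subset_Icc_self
  rw [← integral_map (f := (Set.Ioc a b).indicator u) hXm.aemeasurable
    hgm.aestronglyMeasurable, hlaw,
    integral_withDensity_eq_integral_toReal_smul (by fun_prop) (by simp),
    intervalIntegral.integral_of_le hab, ← integral_indicator measurableSet_Ioc,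
    ← integral_const_mul]
  refine integral_mono_of_nonneg (Filter.Eventually.of_forall fun x => ?_)
    (hint.const_mul M) (Filter.Eventually.of_forall fun x => ?_)
  · simpa using mul_nonneg ENNReal.toReal_nonneg (h0 x)
  · simp only [ENNReal.toReal_ofReal (hf x), smul_eq_mul]
    exact mul_le_mul_of_nonneg_right (hfM x) (h0 x)

theorem aux_scalar {Ω : Type*} [MeasurableSpace Ω] (P : Measure Ω) [IsProbabilityMeasure P]
    (X : Ω → ℝ) (hXm : Measurable X) (hXint : Integrable X P)
    (f : ℝ → ℝ) (M : ℝ) (hf : ∀ y, 0 ≤ f y) (hfM : ∀ y, f y ≤ M) (hfm : Measurable f)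
    (hlaw : Measure.map X P = volume.withDensity (fun y => ENNReal.ofReal (f y)))
    (s t : ℝ) :
    -(∫ ω, min s (X ω) ∂P) ≤ -(∫ ω, min t (X ω) ∂P)
        + (cdf (Measure.map X P) t - 1) * (s - t) + M / 2 * (s - t) ^ 2 := by
  have hP : IsProbabilityMeasure (Measure.map X P) :=
    Measure.isProbabilityMeasure_map hXm.aemeasurable
  have hmin : ∀ c : ℝ, Integrable (fun ω => min c (X ω)) P := fun c =>
    (integrable_const c).inf hXint
  have hind : Integrable ((X ⁻¹' Set.Iic t).indicator (fun _ => (1 : ℝ))) P :=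
    (integrable_const 1).indicator (hXm measurableSet_Iic)
  have hcdf : cdf (Measure.map X P) t
      = ∫ ω, (X ⁻¹' Set.Iic t).indicator (fun _ => (1 : ℝ)) ω ∂P := by
    rw [cdf_eq_real, map_measureReal_apply hXm measurableSet_Iic,
      integral_indicator_const _ (hXm measurableSet_Iic)]
    simp
  have hI : ∀ ω, (X ⁻¹' Set.Iic t).indicator (fun _ => (1 : ℝ)) ω
      = if X ω ≤ t then 1 else 0 := by
    intro ω
    by_cases hx : X ω ≤ t <;> simp [hx]
  have hsub1 : Integrable (fun ω => min t (X ω) - min s (X ω)) P := (hmin t).sub (hmin s)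
  have hsub2 : Integrable (fun ω =>
      ((X ⁻¹' Set.Iic t).indicator (fun _ => (1 : ℝ)) ω - 1) * (s - t)) P :=
    (hind.sub (integrable_const 1)).mul_const _
  have key : ∫ ω, (min t (X ω) - min s (X ω)
      - ((X ⁻¹' Set.Iic t).indicator (fun _ => (1 : ℝ)) ω - 1) * (s - t)) ∂P
      = ∫ ω, min t (X ω) ∂P - ∫ ω, min s (X ω) ∂P
        - (cdf (Measure.map X P) t - 1) * (s - t) := by
    rw [integral_sub hsub1 hsub2,
      integral_sub (hmin t) (hmin s), integral_mul_const,
      integral_sub hind (integrable_const 1), hcdf]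
    simp
  have hmain : ∫ ω, (min t (X ω) - min s (X ω)
      - ((X ⁻¹' Set.Iic t).indicator (fun _ => (1 : ℝ)) ω - 1) * (s - t)) ∂P
      ≤ M / 2 * (s - t) ^ 2 := by
    rcases le_total t s with h | h
    · have hb := aux_bound P X hXm f M hf hfM hfm hlaw t s h (fun x => s - x) (by fun_prop)
        (fun x hx => sub_nonneg.2 hx.2)
      have hi : ∫ x in t..s, (s - x) = (s - t) ^ 2 / 2 := by
        rw [intervalIntegral.integral_sub (by simp) (by simp)]
        simp
        ring
      rw [hi] at hb
      refine le_trans (le_of_eq ?_) (hb.trans (le_of_eq (by ring)))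
      congr 1
      funext ω
      rw [hI]
      simp only [Set.indicator_apply, Set.mem_Ioc]
      generalize X ω = x
      clear * - h
      grind
    · have hb := aux_bound P X hXm f M hf hfM hfm hlaw s t h (fun x => x - s) (by fun_prop)
        (fun x hx => sub_nonneg.2 hx.1.le)
      have hi : ∫ x in s..t, (x - s) = (s - t) ^ 2 / 2 := by
        rw [intervalIntegral.integral_sub (by simp) (by simp)]
        simp
        ring
      rw [hi] at hb
      refine le_trans (le_of_eq ?_) (hb.trans (le_of_eq (by ring)))
      congr 1
      funext ω
      rw [hI]
      simp only [Set.indicator_apply, Set.mem_Ioc]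
      generalize X ω = x
      clear * - h
      grind
  linarith

/-- The separable quadratic upper bound (25): if the demand density satisfies
`0 ≤ f ≤ M`, then for nonnegative `r, r⁰`,
`-E[min(∑ rᵢ, X)] ≤ -E[min(∑ r⁰ᵢ, X)] + (F(∑ r⁰ᵢ) - 1)(∑ rᵢ - ∑ r⁰ᵢ)
  + (n M / 2) ∑ (rᵢ - r⁰ᵢ)²`. -/
theorem expected_min_quadratic_upper_bound
    {Ω : Type*} [MeasurableSpace Ω] (P : Measure Ω) [IsProbabilityMeasure P]
    (X : Ω → ℝ) (hXm : Measurable X) (hXnn : ∀ ω, 0 ≤ X ω) (hXint : Integrable X P)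
    (f : ℝ → ℝ) (M : ℝ) (hf : ∀ y, 0 ≤ f y) (hfM : ∀ y, f y ≤ M) (hfm : Measurable f)
    (hlaw : Measure.map X P = volume.withDensity (fun y => ENNReal.ofReal (f y)))
    (n : ℕ) (hn : 1 ≤ n) (r r0 : Fin n → ℝ)
    (hr : ∀ i, 0 ≤ r i) (hr0 : ∀ i, 0 ≤ r0 i) :
    -(∫ ω, min (∑ i, r i) (X ω) ∂P)
      ≤ -(∫ ω, min (∑ i, r0 i) (X ω) ∂P)
        + (cdf (Measure.map X P) (∑ i, r0 i) - 1) * ((∑ i, r i) - ∑ i, r0 i)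
        + ((n : ℝ) * M / 2) * ∑ i, (r i - r0 i) ^ 2 := by
  have h1 := aux_scalar P X hXm hXint f M hf hfM hfm hlaw (∑ i, r i) (∑ i, r0 i)
  have hM : 0 ≤ M := (hf 0).trans (hfM 0)
  have h2 : ((∑ i, r i) - ∑ i, r0 i) ^ 2 ≤ (n : ℝ) * ∑ i, (r i - r0 i) ^ 2 := by
    rw [← Finset.sum_sub_distrib]
    simpa using sq_sum_le_card_mul_sum_sq (s := Finset.univ) (f := fun i => r i - r0 i)
  have h3 := mul_le_mul_of_nonneg_left h2 (by positivity : 0 ≤ M / 2)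
  linarith
end

section
/- The objective of the rate subproblem (24) is convex: for each user k let X_k be a nonnegative integrable random variable (the random demand), θ_k ≥ 0, and for each path p serving user k let z_{k,p} : ℝ → ℝ be a nonnegative locally integrable function. Then the function (r_k^p)_{k,p} ↦ ∑_{k=1}^K [ −E[min(∑_{p ∈ P_k} r_k^p, X_k)] + θ_k ∑_{p ∈ P_k} ∫_0^{r_k^p} z_{k,p}(v)(r_k^p − v) dv ] is convex on the nonnegative orthant. -/
open MeasureTheory

lemma outage_intble (z : ℝ → ℝ) (hz : LocallyIntegrable z volume) (r a b : ℝ) :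
    IntervalIntegrable (fun v => z v * max (r - v) 0) volume a b := by
  apply IntervalIntegrable.mul_continuousOn
  · exact (hz.integrableOn_isCompact isCompact_uIcc).intervalIntegrable
  · fun_prop

lemma outage_eq (z : ℝ → ℝ) (hz : LocallyIntegrable z volume) (r M : ℝ) (h0 : 0 ≤ r)
    (hM : r ≤ M) :
    ∫ v in (0:ℝ)..r, z v * (r - v) = ∫ v in (0:ℝ)..M, z v * max (r - v) 0 := by
  rw [← intervalIntegral.integral_add_adjacent_intervals
    (outage_intble z hz r 0 r) (outage_intble z hz r r M)]
  have h1 : ∫ v in r..M, z v * max (r - v) 0 = 0 := by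
    rw [intervalIntegral.integral_congr (g := fun _ => (0:ℝ))]
    · simp
    · intro v hv
      rw [Set.uIcc_of_le hM] at hv
      simp only
      rw [max_eq_right (by linarith [hv.1]), mul_zero]
  rw [h1, add_zero]
  apply intervalIntegral.integral_congr
  intro v hv
  rw [Set.uIcc_of_le h0] at hv
  simp only
  rw [max_eq_left (by linarith [hv.2])]

lemma outage_convex (z : ℝ → ℝ) (hz : LocallyIntegrable z volume) (hn : ∀ v, 0 ≤ z v)
    (a b s t : ℝ) (ha : 0 ≤ a) (hb : 0 ≤ b) (hs : 0 ≤ s) (ht : 0 ≤ t) (hst : s + t = 1) :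
    ∫ v in (0:ℝ)..(s * a + t * b), z v * (s * a + t * b - v) ≤
      s * (∫ v in (0:ℝ)..a, z v * (a - v)) + t * ∫ v in (0:ℝ)..b, z v * (b - v) := by
  have hm0 : 0 ≤ s * a + t * b := by positivity
  have hm : s * a + t * b ≤ a + b := by nlinarith
  rw [outage_eq z hz _ (a + b) hm0 hm, outage_eq z hz a (a + b) ha (by linarith),
    outage_eq z hz b (a + b) hb (by linarith), ← intervalIntegral.integral_const_mul,
    ← intervalIntegral.integral_const_mul, ← intervalIntegral.integral_add
      ((outage_intble z hz a _ _).const_mul s) ((outage_intble z hz b _ _).const_mul t)]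
  apply intervalIntegral.integral_mono_on (by linarith) (outage_intble z hz _ _ _)
    (((outage_intble z hz a _ _).const_mul s).add ((outage_intble z hz b _ _).const_mul t))
  intro v _
  have key : max (s * a + t * b - v) 0 ≤ s * max (a - v) 0 + t * max (b - v) 0 := by
    apply max_le
    · have h1 := mul_le_mul_of_nonneg_left (le_max_left (a - v) 0) hs
      have h2 := mul_le_mul_of_nonneg_left (le_max_left (b - v) 0) ht
      have h3 : s * a + t * b - v = s * (a - v) + t * (b - v) := by
        linear_combination v * hst
      linarith
    · positivity
  have := mul_le_mul_of_nonneg_left key (hn v)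
  linarith

lemma supp_concave {Ω : Type*} [MeasurableSpace Ω] (P : Measure Ω) [IsProbabilityMeasure P]
    (X : Ω → ℝ) (hX : Integrable X P)
    (a b s t : ℝ) (hs : 0 ≤ s) (ht : 0 ≤ t) (hst : s + t = 1) :
    s * (∫ ω, min a (X ω) ∂P) + t * (∫ ω, min b (X ω) ∂P) ≤
      ∫ ω, min (s * a + t * b) (X ω) ∂P := by
  have hi : ∀ c : ℝ, Integrable (fun ω => min c (X ω)) P := fun c =>
    (integrable_const c).inf hX
  rw [← integral_const_mul, ← integral_const_mul,
    ← integral_add ((hi a).const_mul s) ((hi b).const_mul t)]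
  apply integral_mono (((hi a).const_mul s).add ((hi b).const_mul t)) (hi _)
  intro ω
  simp only [Pi.add_apply]
  apply le_min
  · have h1 := mul_le_mul_of_nonneg_left (min_le_left a (X ω)) hs
    have h2 := mul_le_mul_of_nonneg_left (min_le_left b (X ω)) ht
    linarith
  · have h1 := mul_le_mul_of_nonneg_left (min_le_right a (X ω)) hs
    have h2 := mul_le_mul_of_nonneg_left (min_le_right b (X ω)) ht
    have h3 : s * X ω + t * X ω = X ω := by rw [← add_mul, hst, one_mul]
    linarith

/-- The objective of the rate subproblem (24) is convex on the nonnegative orthant: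
`(r_k^p) ↦ ∑_k [ -E[min(∑_p r_k^p, X_k)] + θ_k ∑_p ∫_0^{r_k^p} z_{k,p}(v)(r_k^p - v) dv ]`. -/
theorem rate_subproblem_objective_convex
    (K : ℕ)
    (Ω : Fin K → Type*) [∀ k, MeasurableSpace (Ω k)]
    (P : ∀ k, Measure (Ω k)) [∀ k, IsProbabilityMeasure (P k)]
    (X : ∀ k, Ω k → ℝ)
    (hXint : ∀ k, Integrable (X k) (P k))
    (hXnn : ∀ k ω, 0 ≤ X k ω)
    (θ : Fin K → ℝ) (hθ : ∀ k, 0 ≤ θ k)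
    (Path : Fin K → Type*) [∀ k, Fintype (Path k)]
    (z : ∀ k, Path k → ℝ → ℝ)
    (hznn : ∀ k p v, 0 ≤ z k p v)
    (hzloc : ∀ k p, LocallyIntegrable (z k p) volume) :
    ConvexOn ℝ
      {x : ∀ k, Path k → ℝ | ∀ k p, 0 ≤ x k p}
      (fun x =>
        ∑ k, (-(∫ ω, min (∑ p, x k p) (X k ω) ∂(P k))
          + θ k * ∑ p, ∫ v in (0:ℝ)..(x k p), z k p v * (x k p - v))) := by
  refine ⟨?_, ?_⟩
  · intro x hx y hy s t hs ht _ k p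
    have h1 := hx k p
    have h2 := hy k p
    simp only [Pi.add_apply, Pi.smul_apply, smul_eq_mul]
    positivity
  · intro x hx y hy s t hs ht hst
    simp only [Pi.add_apply, Pi.smul_apply, smul_eq_mul]
    rw [Finset.mul_sum, Finset.mul_sum, ← Finset.sum_add_distrib]
    apply Finset.sum_le_sum
    intro k _
    have h1 := supp_concave (P k) (X k) (hXint k) (∑ p, x k p) (∑ p, y k p) s t hs ht hst
    have h2 : ∑ p, (s * x k p + t * y k p) = s * ∑ p, x k p + t * ∑ p, y k p := by
      rw [Finset.sum_add_distrib, Finset.mul_sum, Finset.mul_sum]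
    have h3 : ∑ p, (∫ v in (0:ℝ)..(s * x k p + t * y k p),
        z k p v * (s * x k p + t * y k p - v)) ≤
        s * (∑ p, ∫ v in (0:ℝ)..(x k p), z k p v * (x k p - v)) +
        t * ∑ p, ∫ v in (0:ℝ)..(y k p), z k p v * (y k p - v) := by
      rw [Finset.mul_sum, Finset.mul_sum, ← Finset.sum_add_distrib]
      apply Finset.sum_le_sum
      intro p _
      exact outage_convex (z k p) (hzloc k p) (hznn k p) _ _ s t (hx k p) (hy k p) hs ht hst
    have h4 := mul_le_mul_of_nonneg_left h3 (hθ k)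
    rw [h2]
    linarith
end
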